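/- Define r* = 10/(2 + 2√2) = 5(√2 − 1), and for real r set ℛ₁ = √(r² − 44r + 92), W₀ = (−3r + 3ℛ₁ + 10)/14, Z₀ = (r − ℛ₁ − 22)/14, and N_W(W,Z) = −rW − (13/8)W² − (1/4)WZ + (7/8)Z². Then there exists ε > 0 such that for every r with r* − ε < r < r*: N_W(W₀, Z₀) < 0. Equivalently, (2r+5)·ℛ₁ > 2r² + 59r − 110 for such r. -/

import Mathlib

noncomputable section

/-- The critical self-similarity exponent `r* = 10/(2 + 2√2) = 5(√2 − 1)`. -/
def rstar : ℝ := 10 / (2 + 2 * Real.sqrt 2)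

/-- `ℛ₁ = √(r² − 44r + 92)`. -/
def R1 (r : ℝ) : ℝ := Real.sqrt (r ^ 2 - 44 * r + 92)

/-- `W₀`, the `W`-coordinate of the sonic point `P_s`. -/
def W0 (r : ℝ) : ℝ := (-3 * r + 3 * R1 r + 10) / 14

/-- `Z₀`, the `Z`-coordinate of the sonic point `P_s`. -/
def Z0 (r : ℝ) : ℝ := (r - R1 r - 22) / 14

/-- `N_W(W,Z) = −rW − (13/8)W² − (1/4)WZ + (7/8)Z²`. -/
def NW (r W Z : ℝ) : ℝ := -r * W - (13 / 8) * W ^ 2 - (1 / 4) * W * Z + (7 / 8) * Z ^ 2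

/-
With `ℛ = ℛ₁` and `q = r² + 10r − 25`, the linear function `ℓ = 6 − 9r/5`, which takes the same
value as `ℛ` at `r*`, satisfies `ℛ² = ℓ² − (56/25) q`. Modulo `ℛ² = r² − 44r + 92` one gets
`2r² + 59r − 110 − (2r + 5)ℛ = −(5/2)(ℛ − ℓ)(8 − r + ℛ)`. The roots of `q` are `r*` and its
conjugate `−5(√2 + 1) = r* − 10√2`; between them `q < 0`, hence `ℛ > ℓ` and `r < 8`, so both
factors on the right are positive.
-/

theorem rstar_eq : rstar = 5 * (√2 - 1) := by
  rw [rstar, div_eq_iff (by positivity)]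
  linear_combination -10 * Real.sq_sqrt (zero_le_two (α := ℝ))

theorem sq_add_ten_mul_sub_eq_mul (r : ℝ) :
    r ^ 2 + 10 * r - 25 = (r - rstar) * (r - (rstar - 10 * √2)) := by
  rw [rstar_eq]
  linear_combination 25 * Real.sq_sqrt (zero_le_two (α := ℝ))

theorem sq_add_ten_mul_sub_neg {r : ℝ} (h : rstar - 10 * √2 < r) (h' : r < rstar) :
    r ^ 2 + 10 * r - 25 < 0 := by
  rw [sq_add_ten_mul_sub_eq_mul]
  exact mul_neg_of_neg_of_pos (sub_neg.2 h') (sub_pos.2 h)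

theorem R1_radicand_eq (r : ℝ) :
    r ^ 2 - 44 * r + 92 = (6 - 9 / 5 * r) ^ 2 - 56 / 25 * (r ^ 2 + 10 * r - 25) := by
  ring

theorem sq_lt_R1_radicand {r : ℝ} (hq : r ^ 2 + 10 * r - 25 < 0) :
    (6 - 9 / 5 * r) ^ 2 < r ^ 2 - 44 * r + 92 := by
  rw [R1_radicand_eq]
  linarith

theorem R1_radicand_nonneg {r : ℝ} (hq : r ^ 2 + 10 * r - 25 < 0) : 0 ≤ r ^ 2 - 44 * r + 92 :=
  (sq_nonneg _).trans (sq_lt_R1_radicand hq).le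

theorem lt_R1 {r : ℝ} (hq : r ^ 2 + 10 * r - 25 < 0) : 6 - 9 / 5 * r < R1 r :=
  Real.lt_sqrt_of_sq_lt (sq_lt_R1_radicand hq)

theorem R1_sq {r : ℝ} (hr : 0 ≤ r ^ 2 - 44 * r + 92) : R1 r ^ 2 = r ^ 2 - 44 * r + 92 :=
  Real.sq_sqrt hr

theorem sub_mul_R1_eq_mul {r : ℝ} (hr : 0 ≤ r ^ 2 - 44 * r + 92) :
    2 * r ^ 2 + 59 * r - 110 - (2 * r + 5) * R1 r =
      -(5 / 2) * ((R1 r - (6 - 9 / 5 * r)) * (8 - r + R1 r)) := by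
  linear_combination 5 / 2 * R1_sq hr

theorem lt_mul_R1 {r : ℝ} (hq : r ^ 2 + 10 * r - 25 < 0) :
    2 * r ^ 2 + 59 * r - 110 < (2 * r + 5) * R1 r := by
  have r_lt_eight : r < 8 := by nlinarith only [hq]
  have R1_nonneg : 0 ≤ R1 r := Real.sqrt_nonneg _
  have factors_pos : 0 < (R1 r - (6 - 9 / 5 * r)) * (8 - r + R1 r) :=
    mul_pos (sub_pos.2 (lt_R1 hq)) (add_pos_of_pos_of_nonneg (sub_pos.2 r_lt_eight) R1_nonneg)
  linarith [sub_mul_R1_eq_mul (R1_radicand_nonneg hq)]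

theorem NW_W0_Z0_eq {r : ℝ} (hr : 0 ≤ r ^ 2 - 44 * r + 92) :
    NW r (W0 r) (Z0 r) = 2 / 49 * (2 * r ^ 2 + 59 * r - 110 - (2 * r + 5) * R1 r) := by
  unfold NW W0 Z0
  linear_combination -(13 / 196) * R1_sq hr

theorem NW_W0_Z0_neg_iff {r : ℝ} (hr : 0 ≤ r ^ 2 - 44 * r + 92) :
    NW r (W0 r) (Z0 r) < 0 ↔ 2 * r ^ 2 + 59 * r - 110 < (2 * r + 5) * R1 r := by
  rw [NW_W0_Z0_eq hr, ← smul_eq_mul, smul_neg_iff_of_pos_left (by norm_num), sub_neg]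

theorem stmt9_general {r : ℝ} (h : rstar - 10 * √2 < r) (h' : r < rstar) :
    NW r (W0 r) (Z0 r) < 0 ∧ 2 * r ^ 2 + 59 * r - 110 < (2 * r + 5) * R1 r := by
  have hq := sq_add_ten_mul_sub_neg h h'
  exact ⟨(NW_W0_Z0_neg_iff (R1_radicand_nonneg hq)).2 (lt_mul_R1 hq), lt_mul_R1 hq⟩

/-- for `r` sufficiently close to `r*` from below, `N_W(P_s) < 0`;
equivalently `(2r+5)ℛ₁ > 2r² + 59r − 110`. -/
theorem stmt9 : ∃ ε : ℝ, 0 < ε ∧ ∀ r : ℝ, rstar - ε < r → r < rstar →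
    NW r (W0 r) (Z0 r) < 0 ∧ 2 * r ^ 2 + 59 * r - 110 < (2 * r + 5) * R1 r :=
  ⟨10 * √2, by positivity, fun _ => stmt9_general⟩
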